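/- For 10 ≤ N ≤ 16, the pull-in voltage of (P)_λ on the unit ball satisfies λ* ≤ λ'_N, where λ'_{10} = 450, λ'_{11} = 560, λ'_{12} = 680, λ'_{13} = 802, λ'_{14} = 940, λ'_{15} = 1100, and λ'_{16} = 1260. -/

import Mathlib

open MeasureTheory Metric Set Filter

/-- The Laplacian of `u : ℝ^N → ℝ`, as the sum of pure second partial derivatives. -/
noncomputable def lap {N : ℕ} (u : EuclideanSpace ℝ (Fin N) → ℝ) (x : EuclideanSpace ℝ (Fin N)) : ℝ :=
  ∑ i : Fin N, fderiv ℝ (fun y => fderiv ℝ u y (EuclideanSpace.single i 1)) x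
    (EuclideanSpace.single i 1)

/-- The biharmonic operator `Δ²`. -/
noncomputable def biharm {N : ℕ} (u : EuclideanSpace ℝ (Fin N) → ℝ)
    (x : EuclideanSpace ℝ (Fin N)) : ℝ :=
  lap (lap u) x

/-- A classical solution of `(P)_λ` on the unit ball `B ⊆ ℝ^N`:
`u ∈ C⁴(B̄)`, `0 < u < 1` in `B`, `Δ²u = λ (1-u)⁻²` in `B`, and `u = 0`, `∂_ν u = 0` on `∂B`. -/
structure IsClassicalSolution (N : ℕ) (lam : ℝ) (u : EuclideanSpace ℝ (Fin N) → ℝ) : Prop where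
  contDiffOn : ContDiffOn ℝ 4 u (closedBall (0 : EuclideanSpace ℝ (Fin N)) 1)
  pos : ∀ x ∈ ball (0 : EuclideanSpace ℝ (Fin N)) 1, 0 < u x
  lt_one : ∀ x ∈ ball (0 : EuclideanSpace ℝ (Fin N)) 1, u x < 1
  eqn : ∀ x ∈ ball (0 : EuclideanSpace ℝ (Fin N)) 1, biharm u x = lam / (1 - u x) ^ 2
  bdry : ∀ x : EuclideanSpace ℝ (Fin N), ‖x‖ = 1 → u x = 0
  bdry_deriv : ∀ x : EuclideanSpace ℝ (Fin N), ‖x‖ = 1 →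
    fderivWithin ℝ u (closedBall (0 : EuclideanSpace ℝ (Fin N)) 1) x x = 0

/-- The set of voltages `λ > 0` for which `(P)_λ` admits a classical solution;
the pull-in voltage `λ*` is its supremum. -/
def solSet (N : ℕ) : Set ℝ := {lam | 0 < lam ∧ ∃ u, IsClassicalSolution N lam u}

/-- `λ̄_N = (8/9)(N - 2/3)(N - 8/3)`. -/
noncomputable def lamBar (N : ℕ) : ℝ := (8 / 9) * ((N : ℝ) - 2 / 3) * ((N : ℝ) - 8 / 3)

/-- The explicit upper bounds λ'_N for 10 ≤ N ≤ 16. -/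
def lamPrime : ℕ → ℝ
  | 10 => 450
  | 11 => 560
  | 12 => 680
  | 13 => 802
  | 14 => 940
  | 15 => 1100
  | 16 => 1260
  | _ => 0

/-!
The bound is a duality argument. Let `V, t ≥ 0` and suppose `φ = t ^ 3 * V` satisfies the clamped
boundary conditions, so that `∫ φ Δ²u = ∫ u Δ²φ`. The tangent line inequality
`t ^ 3 / y ^ 2 ≥ 3 * t - 2 * y` at `y = 1 - u` bounds the left-hand side from below by
`λ ∫ V (3 t - 2 + 2 u)`. If `Δ²φ ≤ 2 L V`, this gives `λ (3 ∫ t V - 2 ∫ V) ≤ 2 (L - λ) ∫ u V`,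
so `2 ∫ V < 3 ∫ t V` forces `λ ≤ L`.

We take `t = r ^ (4 / 3) * τ (r ^ 2)` and `V = r ^ (κ - N) * q (r ^ 2)` with polynomials `τ`, `q`
such that `(1 - s) ^ 2` divides `q s`. The exponent `4 / 3` is that of the singular profile
`1 - C * r ^ (4 / 3)` of the equation and makes `Δ²φ` again `r ^ (κ - N)` times a polynomial in
`r ^ 2`. What remains is one polynomial inequality on `(0, 1)`, read off from Bernstein
coefficients, and one inequality between rational moments.
-/

section

open Topology Asymptotics Polynomial

local notation:max "ℝ^" n:max => EuclideanSpace ℝ (Fin n)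

/-! ### Smooth cutoffs -/

section Cutoff

/-- A smooth cutoff of the interval `(0, 1)`, which for `n > 0` is `1` on `[2 / n, 1 - 2 / n]` and
vanishes outside `(1 / n, 1 - 1 / n)`. -/
noncomputable def intervalCutoff (n s : ℝ) : ℝ :=
  Real.smoothTransition (n * s - 1) * Real.smoothTransition (n * (1 - s) - 1)

lemma intervalCutoff_nonneg (n s : ℝ) : 0 ≤ intervalCutoff n s :=
  mul_nonneg (Real.smoothTransition.nonneg _) (Real.smoothTransition.nonneg _)

lemma intervalCutoff_le_one (n s : ℝ) : intervalCutoff n s ≤ 1 :=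
  mul_le_one₀ (Real.smoothTransition.le_one _) (Real.smoothTransition.nonneg _)
    (Real.smoothTransition.le_one _)

lemma contDiff_intervalCutoff (n : ℝ) : ContDiff ℝ 1 (intervalCutoff n) := by
  have hS : ContDiff ℝ 1 Real.smoothTransition := Real.smoothTransition.contDiff (n := 1)
  exact (hS.comp (by fun_prop)).mul (hS.comp (by fun_prop))

lemma intervalCutoff_eventuallyEq_zero {n s : ℝ} (hn : 0 ≤ n) (hs : s ∉ Ioo 0 1) :
    intervalCutoff n =ᶠ[𝓝 s] 0 := by
  have hor : n * s - 1 < 0 ∨ n * (1 - s) - 1 < 0 := by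
    by_contra! h
    exact hs ⟨by nlinarith, by nlinarith⟩
  rcases hor with h | h
  · have hcont : Continuous fun t => n * t - 1 := by fun_prop
    filter_upwards [hcont.continuousAt.eventually_lt_const h] with t ht
    simp [intervalCutoff, Real.smoothTransition.zero_of_nonpos ht.le]
  · have hcont : Continuous fun t => n * (1 - t) - 1 := by fun_prop
    filter_upwards [hcont.continuousAt.eventually_lt_const h] with t ht
    simp [intervalCutoff, Real.smoothTransition.zero_of_nonpos ht.le]

lemma eventually_intervalCutoff_eventuallyEq_one {s : ℝ} (hs : s ∈ Ioo 0 1) :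
    ∀ᶠ n in atTop, intervalCutoff n =ᶠ[𝓝 s] 1 := by
  filter_upwards [eventually_gt_atTop (2 / s), eventually_gt_atTop (2 / (1 - s))] with n h₀ h₁
  have h₀' : 1 < n * s - 1 := by
    have := (div_lt_iff₀ hs.1).1 h₀
    linarith
  have h₁' : 1 < n * (1 - s) - 1 := by
    have := (div_lt_iff₀ (sub_pos.2 hs.2)).1 h₁
    linarith
  filter_upwards [
    (by fun_prop : Continuous fun t => n * t - 1).continuousAt.eventually_const_lt h₀',
    (by fun_prop : Continuous fun t => n * (1 - t) - 1).continuousAt.eventually_const_lt h₁']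
    with t ht₀ ht₁
  simp [intervalCutoff, Real.smoothTransition.one_of_one_le ht₀.le,
    Real.smoothTransition.one_of_one_le ht₁.le]

lemma exists_abs_add_one_mul_deriv_smoothTransition_le :
    ∃ K, ∀ y, |(y + 1) * deriv Real.smoothTransition y| ≤ K := by
  have hderiv : Continuous (deriv Real.smoothTransition) :=
    (Real.smoothTransition.contDiff (n := 1)).continuous_deriv le_rfl
  have hsupp : HasCompactSupport fun y => (y + 1) * deriv Real.smoothTransition y := by
    refine .intro (isCompact_Icc (a := (0 : ℝ)) (b := 1)) fun y hy => ?_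
    have hconst : ∃ c, Real.smoothTransition =ᶠ[𝓝 y] fun _ => c := by
      rcases lt_or_ge y 0 with h | h
      · exact ⟨0, by filter_upwards [Iio_mem_nhds h] with z hz using
          Real.smoothTransition.zero_of_nonpos (mem_Iio.1 hz).le⟩
      · have h' : 1 < y := not_le.1 fun h' => hy ⟨h, h'⟩
        exact ⟨1, by filter_upwards [Ioi_mem_nhds h'] with z hz using
          Real.smoothTransition.one_of_one_le (mem_Ioi.1 hz).le⟩
    obtain ⟨c, hc⟩ := hconst
    simp [hc.deriv_eq]
  exact hsupp.exists_bound_of_continuous ((continuous_id.add continuous_const).mul hderiv)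

lemma deriv_intervalCutoff (n s : ℝ) :
    deriv (intervalCutoff n) s =
      n * deriv Real.smoothTransition (n * s - 1) * Real.smoothTransition (n * (1 - s) - 1) -
      Real.smoothTransition (n * s - 1) * (n * deriv Real.smoothTransition (n * (1 - s) - 1)) := by
  have hS : Differentiable ℝ Real.smoothTransition :=
    (Real.smoothTransition.contDiff (n := 1)).differentiable one_ne_zero
  have h₀ := (hS (n * s - 1)).hasDerivAt.comp s (((hasDerivAt_id s).const_mul n).sub_const 1)
  have h₁ := (hS (n * (1 - s) - 1)).hasDerivAt.comp s
    ((((hasDerivAt_id s).const_sub 1).const_mul n).sub_const 1)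
  refine (h₀.mul h₁).deriv.trans ?_
  simp only [Function.comp_apply, id_eq]
  ring

lemma exists_abs_mul_deriv_intervalCutoff_le :
    ∃ K, ∀ n, ∀ s ∈ Ioo (0 : ℝ) 1, |(1 - s) * s * deriv (intervalCutoff n) s| ≤ K := by
  obtain ⟨K, hK⟩ := exists_abs_add_one_mul_deriv_smoothTransition_le
  refine ⟨2 * K, fun n s hs => ?_⟩
  have hle : ∀ {a b c : ℝ}, b ∈ Icc 0 1 → c ∈ Icc 0 1 → |a| ≤ K → |a * (b * c)| ≤ K :=
    fun {a b c} hb hc ha => by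
      rw [abs_mul, abs_of_nonneg (mul_nonneg hb.1 hc.1)]
      exact (mul_le_of_le_one_right (abs_nonneg a) (mul_le_one₀ hb.2 hc.1 hc.2)).trans ha
  have hS : ∀ y, Real.smoothTransition y ∈ Icc (0 : ℝ) 1 := fun y =>
    ⟨Real.smoothTransition.nonneg y, Real.smoothTransition.le_one y⟩
  have h₀ := hle (hS (n * (1 - s) - 1)) (c := 1 - s) ⟨by linarith [hs.2], by linarith [hs.1]⟩
    (hK (n * s - 1))
  have h₁ := hle (hS (n * s - 1)) (Ioo_subset_Icc_self hs) (hK (n * (1 - s) - 1))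
  rw [sub_add_cancel] at h₀ h₁
  rw [deriv_intervalCutoff, two_mul]
  exact (abs_sub _ _).trans' (le_of_eq (by ring_nf)) |>.trans (add_le_add h₀ h₁)

end Cutoff

section CompactSupport

variable {E : Type*} [NormedAddCommGroup E] [NormedSpace ℝ E] [MeasurableSpace E] [BorelSpace E]
  {μ : Measure E}

lemma integrable_fderiv_apply_of_hasCompactSupport [IsFiniteMeasureOnCompacts μ] {f : E → ℝ}
    (hf : ContDiff ℝ 1 f) (hsupp : HasCompactSupport f) (v : E) :
    Integrable (fun x => fderiv ℝ f x v) μ :=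
  ((hf.continuous_fderiv one_ne_zero).clm_apply continuous_const).integrable_of_hasCompactSupport
    (hsupp.fderiv_apply (𝕜 := ℝ) v)

variable [FiniteDimensional ℝ E] [μ.IsAddHaarMeasure]

lemma integral_fderiv_apply_eq_zero_of_hasCompactSupport {f : E → ℝ} (hf : ContDiff ℝ 1 f)
    (hsupp : HasCompactSupport f) (v : E) : ∫ x, fderiv ℝ f x v ∂μ = 0 := by
  simpa using integral_mul_fderiv_eq_neg_fderiv_mul_of_integrable (μ := μ) (f := fun _ => (1 : ℝ))
    (by simp) (by simpa using integrable_fderiv_apply_of_hasCompactSupport hf hsupp v)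
    (by simpa using hf.continuous.integrable_of_hasCompactSupport hsupp)
    (fun x _ => by fun_prop) fun x _ => hf.differentiable one_ne_zero x

end CompactSupport

section PuncturedBall

variable {E : Type*} [NormedAddCommGroup E]

variable (E) in
/-- The open unit ball without its centre: the domain on which radial functions with a power
singularity at the origin are smooth. -/
def puncturedBall : Set E := ball 0 1 \ {0}

lemma isOpen_puncturedBall : IsOpen (puncturedBall E) := isOpen_ball.sdiff isClosed_singleton

lemma puncturedBall_subset_closedBall : puncturedBall E ⊆ closedBall 0 1 :=
  sdiff_subset.trans ball_subset_closedBall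

lemma mem_puncturedBall {x : E} : x ∈ puncturedBall E ↔ ‖x‖ ∈ Ioo 0 1 := by
  simp [puncturedBall, and_comm]

lemma mem_puncturedBall_iff_sq {x : E} : x ∈ puncturedBall E ↔ ‖x‖ ^ 2 ∈ Ioo 0 1 := by
  simp [puncturedBall, and_comm, sq_lt_one_iff_abs_lt_one, sq_pos_iff]

lemma ne_zero_of_mem_puncturedBall {x : E} (hx : x ∈ puncturedBall E) : x ≠ 0 := hx.2

lemma integrableOn_puncturedBall_of_isBigO [MeasurableSpace E] [BorelSpace E]
    [SecondCountableTopology E] {μ : Measure E} {f g : E → ℝ}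
    (hf : ContinuousOn f (puncturedBall E)) (hfg : f =O[𝓟 (puncturedBall E)] g)
    (hg : IntegrableOn g (puncturedBall E) μ) : IntegrableOn f (puncturedBall E) μ := by
  have hmeas := (isOpen_puncturedBall (E := E)).measurableSet
  obtain ⟨C, hC⟩ := isBigO_principal.1 hfg
  exact (hg.norm.const_mul C).mono' (hf.aestronglyMeasurable hmeas)
    (ae_restrict_of_forall_mem hmeas hC)

lemma intervalCutoff_sq_norm_eventuallyEq_zero {n : ℝ} (hn : 0 ≤ n) {x : E}
    (hx : x ∉ puncturedBall E) : (fun y : E => intervalCutoff n (‖y‖ ^ 2)) =ᶠ[𝓝 x] 0 :=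
  (intervalCutoff_eventuallyEq_zero hn (mem_puncturedBall_iff_sq.not.1 hx)).comp_tendsto
    (by fun_prop : Continuous fun y : E => ‖y‖ ^ 2).continuousAt

lemma intervalCutoff_sq_norm_mul_eventuallyEq_zero {n : ℝ} (hn : 0 ≤ n) (f : E → ℝ) {x : E}
    (hx : x ∉ puncturedBall E) : (fun y => intervalCutoff n (‖y‖ ^ 2) * f y) =ᶠ[𝓝 x] 0 := by
  filter_upwards [intervalCutoff_sq_norm_eventuallyEq_zero hn hx] with y hy
  rw [hy, Pi.zero_apply, zero_mul]

lemma hasCompactSupport_intervalCutoff_sq_norm_mul [ProperSpace E] {n : ℝ} (hn : 0 ≤ n)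
    (f : E → ℝ) :
    HasCompactSupport fun x => intervalCutoff n (‖x‖ ^ 2) * f x :=
  .intro (isCompact_closedBall (0 : E) 1) fun _ hx =>
    (intervalCutoff_sq_norm_mul_eventuallyEq_zero hn f
      fun h => hx (puncturedBall_subset_closedBall h)).eq_of_nhds

variable [InnerProductSpace ℝ E]

lemma contDiff_intervalCutoff_sq_norm (n : ℝ) :
    ContDiff ℝ 1 fun x : E => intervalCutoff n (‖x‖ ^ 2) :=
  (contDiff_intervalCutoff n).comp (contDiff_norm_sq ℝ)

lemma contDiff_intervalCutoff_sq_norm_mul {n : ℝ} (hn : 0 ≤ n) {f : E → ℝ}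
    (hf : ContDiffOn ℝ 1 f (puncturedBall E)) :
    ContDiff ℝ 1 fun x => intervalCutoff n (‖x‖ ^ 2) * f x := by
  refine contDiff_iff_contDiffAt.2 fun x => ?_
  by_cases hx : x ∈ puncturedBall E
  · exact (contDiff_intervalCutoff_sq_norm n).contDiffAt.mul
      (hf.contDiffAt (isOpen_puncturedBall.mem_nhds hx))
  · exact contDiffAt_const.congr_of_eventuallyEq
      (intervalCutoff_sq_norm_mul_eventuallyEq_zero hn f hx)

lemma fderiv_intervalCutoff_sq_norm (n : ℝ) (x v : E) :
    fderiv ℝ (fun y : E => intervalCutoff n (‖y‖ ^ 2)) x v =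
      2 * deriv (intervalCutoff n) (‖x‖ ^ 2) * inner ℝ x v := by
  have hderiv := (((contDiff_intervalCutoff n).differentiable one_ne_zero)
    (‖x‖ ^ 2)).hasDerivAt.comp_hasFDerivAt x (hasStrictFDerivAt_norm_sq x).hasFDerivAt
  rw [show (fun y : E => intervalCutoff n (‖y‖ ^ 2)) = intervalCutoff n ∘ fun y : E => ‖y‖ ^ 2
    from rfl, hderiv.fderiv]
  simp only [smul_apply, innerSL_apply_apply, smul_eq_mul, nsmul_eq_mul, Nat.cast_ofNat]
  ring

end PuncturedBall

/-! ### Integration by parts on the punctured ball -/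

section Divergence

variable {N : ℕ}

/-- The divergence of the vector field on `ℝ^N` with components `F i`. -/
noncomputable def divergence (F : Fin N → ℝ^N → ℝ) (x : ℝ^N) : ℝ :=
  ∑ i, fderiv ℝ (F i) x (EuclideanSpace.single i 1)

lemma divergence_mul {χ : ℝ^N → ℝ} {F : Fin N → ℝ^N → ℝ} {x : ℝ^N} (hχ : DifferentiableAt ℝ χ x)
    (hF : ∀ i, DifferentiableAt ℝ (F i) x) :
    divergence (fun i y => χ y * F i y) x =
      χ x * divergence F x + ∑ i, fderiv ℝ χ x (EuclideanSpace.single i 1) * F i x := by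
  simp only [divergence, Finset.mul_sum, ← Finset.sum_add_distrib]
  refine Finset.sum_congr rfl fun i _ => ?_
  rw [fderiv_fun_mul hχ (hF i)]
  simp only [add_apply, smul_apply, smul_eq_mul]
  ring

lemma divergence_intervalCutoff_sq_norm_mul (n : ℝ) {F : Fin N → ℝ^N → ℝ}
    {x : ℝ^N} (hF : ∀ i, DifferentiableAt ℝ (F i) x) :
    divergence (fun i y => intervalCutoff n (‖y‖ ^ 2) * F i y) x =
      intervalCutoff n (‖x‖ ^ 2) * divergence F x +
        2 * deriv (intervalCutoff n) (‖x‖ ^ 2) * ∑ i, x i * F i x := by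
  rw [divergence_mul ((contDiff_intervalCutoff_sq_norm n).differentiable one_ne_zero x) hF,
    Finset.mul_sum]
  simp [fderiv_intervalCutoff_sq_norm, EuclideanSpace.inner_single_right, mul_assoc]

variable {F : Fin N → ℝ^N → ℝ}

lemma integrable_divergence_intervalCutoff_sq_norm_mul {n : ℝ} (hn : 0 ≤ n)
    (hF : ∀ i, ContDiffOn ℝ 1 (F i) (puncturedBall ℝ^N)) :
    Integrable (divergence fun i y => intervalCutoff n (‖y‖ ^ 2) * F i y) :=
  integrable_finsetSum _ fun i _ => integrable_fderiv_apply_of_hasCompactSupport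
    (contDiff_intervalCutoff_sq_norm_mul hn (hF i))
    (hasCompactSupport_intervalCutoff_sq_norm_mul hn _) _

lemma integral_divergence_intervalCutoff_sq_norm_mul {n : ℝ} (hn : 0 ≤ n)
    (hF : ∀ i, ContDiffOn ℝ 1 (F i) (puncturedBall ℝ^N)) :
    ∫ x in puncturedBall ℝ^N, divergence (fun i y => intervalCutoff n (‖y‖ ^ 2) * F i y) x = 0 := by
  rw [setIntegral_eq_integral_of_forall_compl_eq_zero fun x hx => Finset.sum_eq_zero fun i _ => by
    simp [(intervalCutoff_sq_norm_mul_eventuallyEq_zero hn (F i) hx).fderiv_eq]]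
  have hcont := fun i => contDiff_intervalCutoff_sq_norm_mul hn (hF i)
  have hsupp := fun i => hasCompactSupport_intervalCutoff_sq_norm_mul hn (F i)
  unfold divergence
  rw [integral_finsetSum _ fun i _ =>
    integrable_fderiv_apply_of_hasCompactSupport (hcont i) (hsupp i) _]
  exact Finset.sum_eq_zero fun i _ =>
    integral_fderiv_apply_eq_zero_of_hasCompactSupport (hcont i) (hsupp i) _

lemma tendsto_divergence_intervalCutoff_sq_norm_mul {x : ℝ^N} (hx : x ∈ puncturedBall ℝ^N)
    (hF : ∀ i, DifferentiableAt ℝ (F i) x) :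
    Tendsto (fun n : ℕ => divergence (fun i y => intervalCutoff n (‖y‖ ^ 2) * F i y) x) atTop
      (𝓝 (divergence F x)) := by
  refine tendsto_const_nhds.congr' ?_
  filter_upwards [tendsto_natCast_atTop_atTop.eventually
    (eventually_intervalCutoff_eventuallyEq_one (mem_puncturedBall_iff_sq.1 hx))] with n hn
  rw [divergence_intervalCutoff_sq_norm_mul n hF, hn.eq_of_nhds, hn.deriv_eq]
  simp

lemma exists_abs_divergence_intervalCutoff_sq_norm_mul_le {g : ℝ^N → ℝ}
    (hF : ∀ i, ContDiffOn ℝ 1 (F i) (puncturedBall ℝ^N))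
    (hflux : (fun x => ∑ i, x i * F i x) =O[𝓟 (puncturedBall ℝ^N)]
      fun x => (1 - ‖x‖ ^ 2) * ‖x‖ ^ 2 * g x) :
    ∃ C, ∀ n, ∀ x ∈ puncturedBall ℝ^N,
      |divergence (fun i y => intervalCutoff n (‖y‖ ^ 2) * F i y) x| ≤
        |divergence F x| + C * |g x| := by
  obtain ⟨K, hK⟩ := exists_abs_mul_deriv_intervalCutoff_le
  obtain ⟨C, hC₀, hC⟩ := hflux.exists_nonneg
  rw [isBigOWith_principal] at hC
  refine ⟨2 * (C * K), fun n x hx => ?_⟩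
  rw [divergence_intervalCutoff_sq_norm_mul n fun i =>
    ((hF i).contDiffAt (isOpen_puncturedBall.mem_nhds hx)).differentiableAt one_ne_zero]
  refine (abs_add_le _ _).trans (add_le_add ?_ ?_)
  · rw [abs_mul, abs_of_nonneg (intervalCutoff_nonneg _ _)]
    exact mul_le_of_le_one_left (abs_nonneg _) (intervalCutoff_le_one _ _)
  · have hs := mem_puncturedBall_iff_sq.1 hx
    calc |2 * deriv (intervalCutoff n) (‖x‖ ^ 2) * ∑ i, x i * F i x|
        = 2 * (|deriv (intervalCutoff n) (‖x‖ ^ 2)| * |∑ i, x i * F i x|) := by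
          rw [abs_mul, abs_mul, abs_two, mul_assoc]
      _ ≤ 2 * (|deriv (intervalCutoff n) (‖x‖ ^ 2)| *
            (C * |(1 - ‖x‖ ^ 2) * ‖x‖ ^ 2 * g x|)) := by gcongr; exact hC x hx
      _ = 2 * (C * |(1 - ‖x‖ ^ 2) * ‖x‖ ^ 2 * deriv (intervalCutoff n) (‖x‖ ^ 2)| * |g x|) := by
          simp only [abs_mul]; ring
      _ ≤ 2 * (C * K * |g x|) := by gcongr; exact hK n _ hs
      _ = 2 * (C * K) * |g x| := by ring

theorem setIntegral_divergence_eq_zero {g : ℝ^N → ℝ}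
    (hF : ∀ i, ContDiffOn ℝ 1 (F i) (puncturedBall ℝ^N))
    (hflux : (fun x => ∑ i, x i * F i x) =O[𝓟 (puncturedBall ℝ^N)]
      fun x => (1 - ‖x‖ ^ 2) * ‖x‖ ^ 2 * g x)
    (hg : IntegrableOn g (puncturedBall ℝ^N))
    (hdiv : IntegrableOn (divergence F) (puncturedBall ℝ^N)) :
    ∫ x in puncturedBall ℝ^N, divergence F x = 0 := by
  obtain ⟨C, hC⟩ := exists_abs_divergence_intervalCutoff_sq_norm_mul_le hF hflux
  have hmeas := (isOpen_puncturedBall (E := ℝ^N)).measurableSet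
  have hlim := tendsto_integral_of_dominated_convergence
    (μ := volume.restrict (puncturedBall ℝ^N)) _
    (fun n : ℕ => (integrable_divergence_intervalCutoff_sq_norm_mul n.cast_nonneg
      hF).aestronglyMeasurable.restrict)
    (hdiv.abs.add (hg.abs.const_mul C))
    (fun n => ae_restrict_of_forall_mem hmeas fun x hx => hC n x hx)
    (ae_restrict_of_forall_mem hmeas fun x hx => tendsto_divergence_intervalCutoff_sq_norm_mul hx
      fun i => ((hF i).contDiffAt (isOpen_puncturedBall.mem_nhds hx)).differentiableAt one_ne_zero)
  simp only [integral_divergence_intervalCutoff_sq_norm_mul (Nat.cast_nonneg _) hF] at hlim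
  exact tendsto_nhds_unique hlim tendsto_const_nhds

lemma sum_coord_mul_apply_single (L : ℝ^N →L[ℝ] ℝ) (x : ℝ^N) :
    ∑ i, x i * L (EuclideanSpace.single i 1) = L x := by
  conv_rhs => rw [← (EuclideanSpace.basisFun (Fin N) ℝ).sum_repr x]
  simp

lemma contDiffOn_fderiv_apply {f : ℝ^N → ℝ} {s : Set ℝ^N} {m n : WithTop ℕ∞} (hs : IsOpen s)
    (hf : ContDiffOn ℝ n f s) (hmn : m + 1 ≤ n) (v : ℝ^N) :
    ContDiffOn ℝ m (fun x => fderiv ℝ f x v) s :=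
  (hf.fderiv_of_isOpen hs hmn).clm_apply contDiffOn_const

lemma contDiffOn_lap {f : ℝ^N → ℝ} {s : Set ℝ^N} {m n : WithTop ℕ∞} (hs : IsOpen s)
    (hf : ContDiffOn ℝ n f s) (hmn : m + 2 ≤ n) : ContDiffOn ℝ m (lap f) s :=
  ContDiffOn.sum fun _ _ => contDiffOn_fderiv_apply hs (contDiffOn_fderiv_apply hs hf
    (m := m + 1) (by rwa [add_assoc, one_add_one_eq_two]) _) le_rfl _

end Divergence

section Polar

variable {E : Type*} [NormedAddCommGroup E] [NormedSpace ℝ E] [FiniteDimensional ℝ E]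
  [Nontrivial E]

variable (E) in
lemma pow_finrank_sub_one_mul_rpow (c : ℝ) {r : ℝ} (hr : 0 < r) :
    r ^ (Module.finrank ℝ E - 1) * r ^ c = r ^ (c + Module.finrank ℝ E - 1) := by
  rw [← Real.rpow_natCast, ← Real.rpow_add hr, Nat.cast_sub Module.finrank_pos, Nat.cast_one]
  ring_nf

variable [MeasurableSpace E] [BorelSpace E] (μ : Measure E) [μ.IsAddHaarMeasure]

lemma integrableOn_norm_rpow_puncturedBall {c : ℝ} (hc : 0 < c + Module.finrank ℝ E) :
    IntegrableOn (fun x : E => ‖x‖ ^ c) (puncturedBall E) μ := by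
  refine IntegrableOn.mono_set ?_ (sdiff_subset : puncturedBall E ⊆ ball 0 1)
  rw [integrableOn_fun_norm_addHaar μ (f := fun r : ℝ => r ^ c)]
  exact ((intervalIntegral.integrableOn_Ioo_rpow_iff one_pos).2 (by linarith)).congr_fun
    (fun r hr => (pow_finrank_sub_one_mul_rpow E c hr.1).symm) measurableSet_Ioo

lemma integral_norm_rpow_puncturedBall {c : ℝ} (hc : 0 < c + Module.finrank ℝ E) :
    ∫ x in puncturedBall E, ‖x‖ ^ c ∂μ = μ.toSphere.real univ / (c + Module.finrank ℝ E) := by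
  have hind : (puncturedBall E).indicator (fun x => ‖x‖ ^ c) =
      fun x => (Ioo (0 : ℝ) 1).indicator (fun r => r ^ c) ‖x‖ := by
    ext x
    simp only [indicator, mem_puncturedBall]
  have hradial : ∫ r in Ioi (0 : ℝ), r ^ (Module.finrank ℝ E - 1) •
      (Ioo (0 : ℝ) 1).indicator (fun r => r ^ c) r = 1 / (c + Module.finrank ℝ E) := by
    calc _ = ∫ r in Ioi (0 : ℝ),
            (Ioo (0 : ℝ) 1).indicator (fun r => r ^ (c + Module.finrank ℝ E - 1)) r :=
          setIntegral_congr_fun measurableSet_Ioi fun r (hr : 0 < r) => by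
            simp only [indicator, smul_eq_mul, mul_ite, mul_zero,
              pow_finrank_sub_one_mul_rpow E c hr]
      _ = ∫ r in (0 : ℝ)..1, r ^ (c + Module.finrank ℝ E - 1) := by
          rw [setIntegral_indicator measurableSet_Ioo, inter_eq_self_of_subset_right
            Ioo_subset_Ioi_self, ← integral_Ioc_eq_integral_Ioo,
            intervalIntegral.integral_of_le zero_le_one]
      _ = 1 / (c + Module.finrank ℝ E) := by
          rw [integral_rpow (.inl (by linarith)), sub_add_cancel, Real.one_rpow,
            Real.zero_rpow hc.ne', sub_zero]
  rw [← integral_indicator isOpen_puncturedBall.measurableSet, hind, integral_fun_norm_addHaar,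
    hradial, μ.toSphere_real_apply_univ]
  simp only [nsmul_eq_mul, smul_eq_mul]
  ring

end Polar

section Green

variable {N : ℕ}

lemma divergence_mul_fderiv_sub {v w : ℝ^N → ℝ} {x : ℝ^N}
    (hv : ContDiffAt ℝ 2 v x) (hw : ContDiffAt ℝ 2 w x) :
    divergence (fun i y => v y * fderiv ℝ w y (EuclideanSpace.single i 1) -
      w y * fderiv ℝ v y (EuclideanSpace.single i 1)) x = v x * lap w x - w x * lap v x := by
  have hdiff : ∀ {u : ℝ^N → ℝ}, ContDiffAt ℝ 2 u x → ∀ i : Fin N, DifferentiableAt ℝ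
      (fun y => fderiv ℝ u y (EuclideanSpace.single i 1)) x := fun hu i =>
    ((hu.fderiv_right (m := 1) (by norm_num)).clm_apply contDiffAt_const).differentiableAt
      one_ne_zero
  have hv₀ := hv.differentiableAt two_ne_zero
  have hw₀ := hw.differentiableAt two_ne_zero
  simp only [divergence, lap, Finset.mul_sum, ← Finset.sum_sub_distrib]
  refine Finset.sum_congr rfl fun i _ => ?_
  rw [fderiv_fun_sub (hv₀.fun_mul (hdiff hw i)) (hw₀.fun_mul (hdiff hv i)),
    fderiv_fun_mul hv₀ (hdiff hw i), fderiv_fun_mul hw₀ (hdiff hv i)]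
  simp only [sub_apply, add_apply, smul_apply, smul_eq_mul]
  ring

theorem integral_mul_lap_sub_mul_lap_eq_zero {v w g : ℝ^N → ℝ}
    (hv : ContDiffOn ℝ 2 v (puncturedBall ℝ^N)) (hw : ContDiffOn ℝ 2 w (puncturedBall ℝ^N))
    (hflux : (fun x => v x * fderiv ℝ w x x - w x * fderiv ℝ v x x) =O[𝓟 (puncturedBall ℝ^N)]
      fun x => (1 - ‖x‖ ^ 2) * ‖x‖ ^ 2 * g x)
    (hg : IntegrableOn g (puncturedBall ℝ^N))
    (hint : IntegrableOn (fun x => v x * lap w x - w x * lap v x) (puncturedBall ℝ^N)) :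
    ∫ x in puncturedBall ℝ^N, (v x * lap w x - w x * lap v x) = 0 := by
  have hopen : IsOpen (puncturedBall ℝ^N) := isOpen_puncturedBall
  have hdiv : EqOn (divergence fun i x => v x * fderiv ℝ w x (EuclideanSpace.single i 1) -
      w x * fderiv ℝ v x (EuclideanSpace.single i 1))
      (fun x => v x * lap w x - w x * lap v x) (puncturedBall ℝ^N) := fun x hx =>
    divergence_mul_fderiv_sub (hv.contDiffAt (hopen.mem_nhds hx))
      (hw.contDiffAt (hopen.mem_nhds hx))
  rw [← setIntegral_congr_fun hopen.measurableSet hdiv]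
  refine setIntegral_divergence_eq_zero (fun i => ?_) ?_ hg
    (hint.congr_fun hdiv.symm hopen.measurableSet)
  · exact ((hv.of_le one_le_two).mul (contDiffOn_fderiv_apply hopen hw (by norm_num) _)).sub
      ((hw.of_le one_le_two).mul (contDiffOn_fderiv_apply hopen hv (by norm_num) _))
  · refine hflux.congr_left fun x => ?_
    rw [← sum_coord_mul_apply_single (fderiv ℝ w x), ← sum_coord_mul_apply_single (fderiv ℝ v x),
      Finset.mul_sum, Finset.mul_sum, ← Finset.sum_sub_distrib]
    exact Finset.sum_congr rfl fun i _ => by ring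

/-- `IsClamped e u` says that `u` is `C⁴` on the punctured unit ball, satisfies the clamped
boundary conditions `u = ∂_ν u = 0` to first order at the unit sphere, and has, together with its
derivatives, the size of `‖x‖ ^ e` at the origin. Radial derivatives enter as `x · ∇u`. -/
structure IsClamped (e : ℝ) (u : ℝ^N → ℝ) : Prop where
  contDiffOn : ContDiffOn ℝ 4 u (puncturedBall ℝ^N)
  isBigO : u =O[𝓟 (puncturedBall ℝ^N)] fun x => (1 - ‖x‖ ^ 2) * ‖x‖ ^ e
  isBigO_fderiv : (fun x => fderiv ℝ u x x) =O[𝓟 (puncturedBall ℝ^N)]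
    fun x => (1 - ‖x‖ ^ 2) * ‖x‖ ^ e
  isBigO_lap : lap u =O[𝓟 (puncturedBall ℝ^N)] fun x => ‖x‖ ^ (e - 2)
  isBigO_fderiv_lap : (fun x => fderiv ℝ (lap u) x x) =O[𝓟 (puncturedBall ℝ^N)]
    fun x => ‖x‖ ^ (e - 2)
  isBigO_biharm : biharm u =O[𝓟 (puncturedBall ℝ^N)] fun x => ‖x‖ ^ (e - 4)

lemma isBigO_one_sub_sq_norm_mul (g : ℝ^N → ℝ) :
    (fun x : ℝ^N => (1 - ‖x‖ ^ 2) * g x) =O[𝓟 (puncturedBall ℝ^N)] g := by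
  refine .of_bound 1 (eventually_principal.2 fun x hx => ?_)
  have hs := mem_puncturedBall_iff_sq.1 hx
  rw [norm_mul, Real.norm_of_nonneg (by linarith [hs.2])]
  gcongr
  linarith [hs.1]

namespace IsClamped

variable {a b : ℝ} {u v : ℝ^N → ℝ}

lemma contDiffOn_lap (hu : IsClamped a u) : ContDiffOn ℝ 2 (lap u) (puncturedBall ℝ^N) :=
  _root_.contDiffOn_lap isOpen_puncturedBall hu.contDiffOn (by norm_num)

lemma continuousOn_biharm (hu : IsClamped a u) : ContinuousOn (biharm u) (puncturedBall ℝ^N) :=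
  (_root_.contDiffOn_lap isOpen_puncturedBall hu.contDiffOn_lap (m := 0) (by norm_num)).continuousOn

lemma isBigO_flux (hu : IsClamped a u) (hv : IsClamped b v) :
    (fun x => u x * fderiv ℝ (lap v) x x - lap v x * fderiv ℝ u x x) =O[𝓟 (puncturedBall ℝ^N)]
      fun x => (1 - ‖x‖ ^ 2) * ‖x‖ ^ 2 * ‖x‖ ^ (a + b - 4) := by
  refine ((hu.isBigO.mul hv.isBigO_fderiv_lap).sub ((hv.isBigO_lap.mul
    hu.isBigO_fderiv).congr_right fun x => mul_comm _ _)).congr' .rfl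
    (eventuallyEq_principal.2 fun x hx => ?_)
  have hx₀ := norm_pos_iff.2 (ne_zero_of_mem_puncturedBall hx)
  simp only [mul_assoc, ← Real.rpow_natCast, ← Real.rpow_add hx₀]
  ring_nf

lemma isBigO_mul_biharm (hu : IsClamped a u) (hv : IsClamped b v) :
    (fun x => u x * biharm v x) =O[𝓟 (puncturedBall ℝ^N)] fun x => ‖x‖ ^ (a + b - 4) := by
  refine ((hu.isBigO.trans (isBigO_one_sub_sq_norm_mul _)).mul hv.isBigO_biharm).congr' .rfl
    (eventuallyEq_principal.2 fun x hx => ?_)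
  simp only [← Real.rpow_add (norm_pos_iff.2 (ne_zero_of_mem_puncturedBall hx)), add_sub_assoc]

lemma isBigO_lap_mul_lap (hu : IsClamped a u) (hv : IsClamped b v) :
    (fun x => lap u x * lap v x) =O[𝓟 (puncturedBall ℝ^N)] fun x => ‖x‖ ^ (a + b - 4) := by
  refine (hu.isBigO_lap.mul hv.isBigO_lap).congr' .rfl (eventuallyEq_principal.2 fun x hx => ?_)
  simp only [← Real.rpow_add (norm_pos_iff.2 (ne_zero_of_mem_puncturedBall hx))]
  ring_nf

variable [NeZero N]

lemma integrableOn_mul_biharm (hu : IsClamped a u) (hv : IsClamped b v) (hab : 4 < a + b + N) :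
    IntegrableOn (fun x => u x * biharm v x) (puncturedBall ℝ^N) :=
  integrableOn_puncturedBall_of_isBigO (hu.contDiffOn.continuousOn.mul hv.continuousOn_biharm)
    (hu.isBigO_mul_biharm hv) (integrableOn_norm_rpow_puncturedBall volume
      (by rw [finrank_euclideanSpace_fin]; linarith))

lemma integrableOn_lap_mul_lap (hu : IsClamped a u) (hv : IsClamped b v) (hab : 4 < a + b + N) :
    IntegrableOn (fun x => lap u x * lap v x) (puncturedBall ℝ^N) :=
  integrableOn_puncturedBall_of_isBigO
    (hu.contDiffOn_lap.continuousOn.mul hv.contDiffOn_lap.continuousOn)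
    (hu.isBigO_lap_mul_lap hv) (integrableOn_norm_rpow_puncturedBall volume
      (by rw [finrank_euclideanSpace_fin]; linarith))

lemma integral_mul_biharm_eq_integral_lap_mul_lap (hu : IsClamped a u) (hv : IsClamped b v)
    (hab : 4 < a + b + N) :
    ∫ x in puncturedBall ℝ^N, u x * biharm v x = ∫ x in puncturedBall ℝ^N, lap v x * lap u x := by
  have hbiharm := hu.integrableOn_mul_biharm hv hab
  have hlap := hv.integrableOn_lap_mul_lap hu (by rwa [add_comm b])
  rw [← sub_eq_zero, ← integral_sub hbiharm hlap]
  exact integral_mul_lap_sub_mul_lap_eq_zero (hu.contDiffOn.of_le (by norm_num))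
    hv.contDiffOn_lap (hu.isBigO_flux hv) (integrableOn_norm_rpow_puncturedBall volume
      (by rw [finrank_euclideanSpace_fin]; linarith)) (hbiharm.sub hlap)

theorem integral_mul_biharm_comm (hu : IsClamped a u) (hv : IsClamped b v)
    (hab : 4 < a + b + N) :
    ∫ x in puncturedBall ℝ^N, u x * biharm v x = ∫ x in puncturedBall ℝ^N, v x * biharm u x := by
  rw [hu.integral_mul_biharm_eq_integral_lap_mul_lap hv hab,
    hv.integral_mul_biharm_eq_integral_lap_mul_lap hu (by linarith)]
  simp only [mul_comm]

end IsClamped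

end Green

section ClosedBall

variable {E : Type*} [NormedAddCommGroup E]

lemma isBigO_norm_rpow_of_continuousOn [ProperSpace E] {f : E → ℝ}
    (hf : ContinuousOn f (closedBall 0 1)) {c : ℝ} (hc : c ≤ 0) :
    f =O[𝓟 (puncturedBall E)] fun x => ‖x‖ ^ c := by
  obtain ⟨C, hC⟩ := (isCompact_closedBall (0 : E) 1).exists_bound_of_continuousOn hf
  refine isBigO_principal.2 ⟨C, fun x hx => ?_⟩
  obtain ⟨hx₀, hx₁⟩ := mem_puncturedBall.1 hx
  have hfC := hC x (puncturedBall_subset_closedBall hx)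
  exact hfC.trans (le_mul_of_one_le_right ((norm_nonneg _).trans hfC)
    ((Real.one_le_rpow_of_pos_of_le_one_of_nonpos hx₀ hx₁.le hc).trans (le_abs_self _)))

variable [NormedSpace ℝ E]

lemma uniqueDiffOn_closedBall_zero_one : UniqueDiffOn ℝ (closedBall (0 : E) 1) :=
  uniqueDiffOn_convex (convex_closedBall _ _)
    ((nonempty_ball.2 one_pos).mono ball_subset_interior_closedBall)

lemma fderiv_eq_fderivWithin_closedBall {f g : E → ℝ} (hfg : EqOn f g (ball 0 1)) {x : E}
    (hx : x ∈ ball 0 1) : fderiv ℝ f x = fderivWithin ℝ g (closedBall 0 1) x := by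
  rw [fderivWithin_of_mem_nhds (closedBall_mem_nhds_of_mem hx)]
  exact (hfg.eventuallyEq_of_mem (isOpen_ball.mem_nhds hx)).fderiv_eq

lemma norm_sub_inv_norm_smul {x : E} (hx : x ∈ puncturedBall E) :
    ‖x - ‖x‖⁻¹ • x‖ = 1 - ‖x‖ := by
  obtain ⟨hx₀, hx₁⟩ := mem_puncturedBall.1 hx
  have hinv : 1 ≤ ‖x‖⁻¹ := (one_le_inv₀ hx₀).2 hx₁.le
  rw [norm_sub_rev, show ‖x‖⁻¹ • x - x = (‖x‖⁻¹ - 1) • x by rw [sub_smul, one_smul], norm_smul,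
    Real.norm_of_nonneg (sub_nonneg.2 hinv), sub_mul, inv_mul_cancel₀ hx₀.ne', one_mul]

lemma isBigO_one_sub_sq_norm_of_contDiffOn [ProperSpace E] {f : E → ℝ}
    (hf : ContDiffOn ℝ 1 f (closedBall 0 1)) (hbdry : ∀ x, ‖x‖ = 1 → f x = 0) :
    f =O[𝓟 (puncturedBall E)] fun x => 1 - ‖x‖ ^ 2 := by
  obtain ⟨C, hC⟩ := (isCompact_closedBall (0 : E) 1).exists_bound_of_continuousOn
    (hf.continuousOn_fderivWithin uniqueDiffOn_closedBall_zero_one le_rfl)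
  refine isBigO_principal.2 ⟨C, fun x hx => ?_⟩
  obtain ⟨hx₀, hx₁⟩ := mem_puncturedBall.1 hx
  have hunit : ‖‖x‖⁻¹ • x‖ = 1 := by
    rw [norm_smul, norm_inv, norm_norm, inv_mul_cancel₀ hx₀.ne']
  have hC₀ : 0 ≤ C := (norm_nonneg _).trans (hC x (puncturedBall_subset_closedBall hx))
  calc ‖f x‖ = ‖f x - f (‖x‖⁻¹ • x)‖ := by rw [hbdry _ hunit, sub_zero]
    _ ≤ C * ‖x - ‖x‖⁻¹ • x‖ :=
        (convex_closedBall (0 : E) 1).norm_image_sub_le_of_norm_fderivWithin_le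
          (hf.differentiableOn one_ne_zero) hC (by simp [hunit])
          (puncturedBall_subset_closedBall hx)
    _ ≤ C * ‖1 - ‖x‖ ^ 2‖ := by
        rw [norm_sub_inv_norm_smul hx]
        gcongr
        exact (by nlinarith : 1 - ‖x‖ ≤ 1 - ‖x‖ ^ 2).trans (le_abs_self _)

end ClosedBall

section ClassicalSolution

variable {N : ℕ}

/-- The Laplacian computed with derivatives within `s`, which makes sense up to the boundary. -/
noncomputable def lapWithin (s : Set ℝ^N) (u : ℝ^N → ℝ) (x : ℝ^N) : ℝ :=
  ∑ i, fderivWithin ℝ (fun y => fderivWithin ℝ u s y (EuclideanSpace.single i 1)) s x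
    (EuclideanSpace.single i 1)

lemma contDiffOn_lapWithin {s : Set ℝ^N} (hs : UniqueDiffOn ℝ s) {u : ℝ^N → ℝ}
    {m n : WithTop ℕ∞} (hu : ContDiffOn ℝ n u s) (hmn : m + 2 ≤ n) :
    ContDiffOn ℝ m (lapWithin s u) s :=
  ContDiffOn.sum fun _ _ => (((hu.fderivWithin hs (m := m + 1)
    (by rwa [add_assoc, one_add_one_eq_two])).clm_apply contDiffOn_const).fderivWithin hs
      le_rfl).clm_apply contDiffOn_const

lemma lap_eqOn_lapWithin_closedBall {u v : ℝ^N → ℝ} (huv : EqOn u v (ball 0 1)) :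
    EqOn (lap u) (lapWithin (closedBall 0 1) v) (ball 0 1) := fun x hx =>
  Finset.sum_congr rfl fun i _ => by
    rw [← fderiv_eq_fderivWithin_closedBall (fun y hy => ?_) hx]
    rw [fderiv_eq_fderivWithin_closedBall huv hy]

lemma isClamped_zero_of_contDiffOn {u : ℝ^N → ℝ} (hu : ContDiffOn ℝ 4 u (closedBall 0 1))
    (hbdry : ∀ x, ‖x‖ = 1 → u x = 0)
    (hbdry_deriv : ∀ x, ‖x‖ = 1 → fderivWithin ℝ u (closedBall 0 1) x x = 0) :
    IsClamped 0 u := by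
  have hunique := uniqueDiffOn_closedBall_zero_one (E := ℝ^N)
  have hlap := contDiffOn_lapWithin hunique hu (m := 2) (by norm_num)
  have hbiharm := contDiffOn_lapWithin hunique hlap (m := 0) (by norm_num)
  have hu_eq : EqOn u u (ball 0 1) := fun _ _ => rfl
  have hlap_eq := lap_eqOn_lapWithin_closedBall hu_eq
  have hbiharm_eq := lap_eqOn_lapWithin_closedBall hlap_eq
  refine ⟨hu.mono puncturedBall_subset_closedBall, ?_, ?_, ?_, ?_, ?_⟩
  · simpa using isBigO_one_sub_sq_norm_of_contDiffOn (hu.of_le (by norm_num)) hbdry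
  · simpa using (isBigO_one_sub_sq_norm_of_contDiffOn ((hu.fderivWithin hunique
      (by norm_num)).clm_apply contDiffOn_id) hbdry_deriv).congr'
      (eventuallyEq_principal.2 fun x hx => by
        simp [fderiv_eq_fderivWithin_closedBall hu_eq hx.1]) .rfl
  · exact (isBigO_norm_rpow_of_continuousOn hlap.continuousOn (by norm_num)).congr'
      (eventuallyEq_principal.2 fun x hx => (hlap_eq hx.1).symm) .rfl
  · exact (isBigO_norm_rpow_of_continuousOn ((hlap.continuousOn_fderivWithin hunique
      (by norm_num)).clm_apply continuousOn_id) (by norm_num)).congr'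
      (eventuallyEq_principal.2 fun x hx => by
        simp [fderiv_eq_fderivWithin_closedBall hlap_eq hx.1]) .rfl
  · exact (isBigO_norm_rpow_of_continuousOn hbiharm.continuousOn (by norm_num)).congr'
      (eventuallyEq_principal.2 fun x hx => (hbiharm_eq hx.1).symm) .rfl

lemma IsClassicalSolution.isClamped {lam : ℝ} {u : ℝ^N → ℝ} (hu : IsClassicalSolution N lam u) :
    IsClamped 0 u :=
  isClamped_zero_of_contDiffOn hu.contDiffOn hu.bdry hu.bdry_deriv

end ClassicalSolution

/-! ### Radial functions -/

section Radial

/-- The function `x ↦ ‖x‖ ^ e * p (‖x‖ ^ 2)`; the class of these is closed under the Laplacian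
away from the origin. -/
noncomputable def radial {E : Type*} [NormedAddCommGroup E] (e : ℝ) (p : ℝ[X]) (x : E) : ℝ :=
  ‖x‖ ^ e * p.eval (‖x‖ ^ 2)

/-- The Euler operator `r d/dr` acting on `r ^ e * p (r ^ 2)`, as an operator on `p`. -/
noncomputable def euler (e : ℝ) (p : ℝ[X]) : ℝ[X] := C e * p + 2 * X * derivative p

lemma one_sub_X_dvd_euler (e : ℝ) {p : ℝ[X]} (hp : (1 - X) ^ 2 ∣ p) : 1 - X ∣ euler e p := by
  obtain ⟨q, rfl⟩ := hp
  refine ⟨C e * (1 - X) * q + 2 * X * (-2 * q + (1 - X) * derivative q), ?_⟩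
  simp only [euler, sq, derivative_mul, derivative_sub, derivative_one, derivative_X]
  ring

lemma euler_add_left (d e : ℝ) (p : ℝ[X]) : euler (d + e) p = C d * p + euler e p := by
  simp only [euler, C_add]
  ring

section NormedGroup

variable {E : Type*} [NormedAddCommGroup E]

lemma radial_mul_radial (d e : ℝ) (p q : ℝ[X]) {x : E} (hx : x ≠ 0) :
    radial d p x * radial e q x = radial (d + e) (p * q) x := by
  simp only [radial, eval_mul, Real.rpow_add (norm_pos_iff.2 hx)]
  ring

lemma radial_sub_two_mul_sq_norm (e : ℝ) (p : ℝ[X]) {x : E} (hx : x ≠ 0) :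
    radial (e - 2) p x * ‖x‖ ^ 2 = radial e p x := by
  rw [radial, radial, mul_right_comm, ← Real.rpow_natCast ‖x‖ 2,
    ← Real.rpow_add (norm_pos_iff.2 hx)]
  simp

lemma isBigO_radial (e : ℝ) (p : ℝ[X]) :
    radial e p =O[𝓟 (puncturedBall E)] fun x => ‖x‖ ^ e := by
  obtain ⟨C, hC⟩ := (isCompact_Icc (a := (0 : ℝ)) (b := 1)).exists_bound_of_continuousOn
    p.continuous.continuousOn
  refine isBigO_principal.2 ⟨C, fun x hx => ?_⟩
  rw [radial, norm_mul, mul_comm]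
  gcongr
  exact hC _ (Ioo_subset_Icc_self (mem_puncturedBall_iff_sq.1 hx))

lemma isBigO_radial_of_dvd (e : ℝ) {p : ℝ[X]} (hp : 1 - X ∣ p) :
    radial e p =O[𝓟 (puncturedBall E)] fun x => (1 - ‖x‖ ^ 2) * ‖x‖ ^ e := by
  obtain ⟨q, rfl⟩ := hp
  refine ((isBigO_refl (fun x : E => 1 - ‖x‖ ^ 2) _).mul (isBigO_radial e q)).congr_left
    fun x => ?_
  simp only [radial, eval_mul, eval_sub, eval_one, eval_X]
  ring

lemma radial_eq_sq_rpow (e : ℝ) (p : ℝ[X]) :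
    (radial e p : E → ℝ) = (fun s => s ^ (e / 2) * p.eval s) ∘ fun x => ‖x‖ ^ 2 := by
  ext x
  rw [Function.comp_apply, radial, ← Real.rpow_natCast ‖x‖ 2, ← Real.rpow_mul (norm_nonneg x),
    Nat.cast_ofNat, mul_div_cancel₀ _ two_ne_zero]

variable [InnerProductSpace ℝ E]

lemma contDiffAt_radial (e : ℝ) (p : ℝ[X]) {x : E} (hx : x ≠ 0) {n : WithTop ℕ∞} :
    ContDiffAt ℝ n (radial e p) x :=
  ((contDiffAt_norm ℝ hx).rpow_const_of_ne (norm_ne_zero_iff.2 hx)).mul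
    ((p.contDiff_aeval n).contDiffAt.comp x (contDiff_norm_sq ℝ).contDiffAt)

lemma contDiffOn_radial (e : ℝ) (p : ℝ[X]) {n : WithTop ℕ∞} :
    ContDiffOn ℝ n (radial e p) (puncturedBall E) := fun _ hx =>
  (contDiffAt_radial e p (ne_zero_of_mem_puncturedBall hx)).contDiffWithinAt

lemma fderiv_radial (e : ℝ) (p : ℝ[X]) {x : E} (hx : x ≠ 0) (v : E) :
    fderiv ℝ (radial e p) x v = radial (e - 2) (euler e p) x * inner ℝ x v := by
  have hs : ‖x‖ ^ 2 ≠ 0 := pow_ne_zero 2 (norm_ne_zero_iff.2 hx)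
  have hprofile := (((hasDerivAt_id _).rpow_const (p := e / 2) (.inl hs)).mul
    (p.hasDerivAt (‖x‖ ^ 2))).comp_hasFDerivAt x (hasStrictFDerivAt_norm_sq x).hasFDerivAt
  rw [radial_eq_sq_rpow, radial_eq_sq_rpow]
  refine (DFunLike.congr_fun hprofile.fderiv v).trans ?_
  have hrpow : (‖x‖ ^ 2) ^ (e / 2) = (‖x‖ ^ 2) ^ (e / 2 - 1) * ‖x‖ ^ 2 := by
    rw [← Real.rpow_add_one hs, sub_add_cancel]
  simp only [id_eq, hrpow, smul_apply, innerSL_apply_apply, smul_eq_mul, nsmul_eq_mul,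
    Nat.cast_ofNat, euler, Function.comp_apply, eval_add, eval_mul, eval_C, eval_X, eval_ofNat,
    sub_div, div_self (two_ne_zero (α := ℝ))]
  ring

lemma fderiv_radial_self (e : ℝ) (p : ℝ[X]) {x : E} (hx : x ≠ 0) :
    fderiv ℝ (radial e p) x x = radial e (euler e p) x := by
  rw [fderiv_radial e p hx, real_inner_self_eq_norm_sq, radial_sub_two_mul_sq_norm e _ hx]

end NormedGroup

variable {N : ℕ}

lemma lap_radial (e : ℝ) (p : ℝ[X]) {x : ℝ^N} (hx : x ≠ 0) :
    lap (radial e p) x = radial (e - 2) (euler (e + N - 2) (euler e p)) x := by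
  set q := euler e p
  have hpartial : ∀ i : Fin N, fderiv ℝ (fun y : ℝ^N => fderiv ℝ (radial e p) y
      (EuclideanSpace.single i 1)) x (EuclideanSpace.single i 1) =
      radial (e - 2 - 2) (euler (e - 2) q) x * (x i) ^ 2 + radial (e - 2) q x := fun i => by
    have hgrad : (fun y : ℝ^N => fderiv ℝ (radial e p) y (EuclideanSpace.single i 1)) =ᶠ[𝓝 x]
        fun y => radial (e - 2) q y * y i := by
      filter_upwards [isOpen_ne.mem_nhds hx] with y hy
      simp [q, fderiv_radial e p hy, EuclideanSpace.inner_single_right]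
    have hcoord : HasFDerivAt (fun y : ℝ^N => y i) (EuclideanSpace.proj i : ℝ^N →L[ℝ] ℝ) x :=
      (EuclideanSpace.proj i : ℝ^N →L[ℝ] ℝ).hasFDerivAt
    rw [hgrad.fderiv_eq, fderiv_fun_mul
      ((contDiffAt_radial (e - 2) q hx).differentiableAt one_ne_zero) hcoord.differentiableAt,
      hcoord.fderiv]
    have hproj : (EuclideanSpace.proj i : ℝ^N →L[ℝ] ℝ) (EuclideanSpace.single i 1) = 1 := by simp
    simp only [add_apply, smul_apply, smul_eq_mul, fderiv_radial (e - 2) q hx,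
      EuclideanSpace.inner_single_right, hproj, conj_trivial, one_mul, mul_one]
    ring
  rw [lap, Finset.sum_congr rfl fun i _ => hpartial i, Finset.sum_add_distrib, ← Finset.mul_sum,
    ← EuclideanSpace.real_norm_sq_eq, radial_sub_two_mul_sq_norm _ _ hx,
    show e + N - 2 = N + (e - 2) by ring, euler_add_left]
  simp only [radial, eval_add, eval_mul, eval_C, Finset.sum_const, Finset.card_univ,
    Fintype.card_fin, nsmul_eq_mul]
  ring

/-- The bilaplacian in dimension `N` acting on `r ^ e * p (r ^ 2)`, as an operator on `p`. -/
noncomputable def radialBiharm (N : ℕ) (e : ℝ) (p : ℝ[X]) : ℝ[X] :=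
  euler (e + N - 4) (euler (e - 2) (euler (e + N - 2) (euler e p)))

lemma lap_eqOn_puncturedBall {u v : ℝ^N → ℝ} (huv : EqOn u v (puncturedBall ℝ^N)) :
    EqOn (lap u) (lap v) (puncturedBall ℝ^N) := fun x hx => by
  have hev := huv.eventuallyEq_of_mem (isOpen_puncturedBall.mem_nhds hx)
  refine Finset.sum_congr rfl fun i _ => ?_
  rw [Filter.EventuallyEq.fderiv_eq (hev.fderiv.mono fun y hy => by rw [hy])]

lemma biharm_radial (e : ℝ) (p : ℝ[X]) {x : ℝ^N} (hx : x ∈ puncturedBall ℝ^N) :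
    biharm (radial e p) x = radial (e - 4) (radialBiharm N e p) x := by
  rw [biharm, lap_eqOn_puncturedBall
    (fun y hy => lap_radial e p (ne_zero_of_mem_puncturedBall hy)) hx,
    lap_radial _ _ (ne_zero_of_mem_puncturedBall hx), radialBiharm]
  ring_nf

lemma isClamped_radial (e : ℝ) {p : ℝ[X]} (hp : (1 - X) ^ 2 ∣ p) :
    IsClamped e (radial e p : ℝ^N → ℝ) := by
  have hlap : EqOn (lap (radial e p)) (radial (e - 2) (euler (e + N - 2) (euler e p)))
      (puncturedBall ℝ^N) := fun x hx => lap_radial e p (ne_zero_of_mem_puncturedBall hx)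
  refine ⟨contDiffOn_radial e p, isBigO_radial_of_dvd e ((dvd_pow_self _ two_ne_zero).trans hp),
    (isBigO_radial_of_dvd e (one_sub_X_dvd_euler e hp)).congr' ?_ .rfl,
    (isBigO_radial (e - 2) _).congr' hlap.symm.eventuallyEq .rfl,
    (isBigO_radial (e - 2) (euler (e - 2) (euler (e + N - 2) (euler e p)))).congr' ?_ .rfl,
    (isBigO_radial (e - 4) (radialBiharm N e p)).congr' ?_ .rfl⟩
  · exact eventuallyEq_principal.2 fun x hx =>
      (fderiv_radial_self e p (ne_zero_of_mem_puncturedBall hx)).symm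
  · refine eventuallyEq_principal.2 fun x hx => ?_
    rw [(hlap.eventuallyEq_of_mem (isOpen_puncturedBall.mem_nhds hx)).fderiv_eq,
      fderiv_radial_self _ _ (ne_zero_of_mem_puncturedBall hx)]
  · exact eventuallyEq_principal.2 fun x hx => (biharm_radial e p hx).symm

end Radial

/-! ### The duality bound -/

section Moment

/-- The moment `∫₀¹ r ^ (c - 1) * p (r ^ 2) dr`, as a linear functional of `p`. -/
noncomputable def moment (c : ℝ) : ℝ[X] →ₗ[ℝ] ℝ :=
  Polynomial.lsum fun k => (c + 2 * k)⁻¹ • LinearMap.id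

lemma moment_monomial (c : ℝ) (k : ℕ) (a : ℝ) : moment c (monomial k a) = a / (c + 2 * k) := by
  simp [moment, Polynomial.sum_monomial_index, div_eq_inv_mul]

lemma moment_C (c a : ℝ) : moment c (C a) = a / c := by
  simp [← monomial_zero_left, moment_monomial]

lemma moment_X_mul (c : ℝ) (p : ℝ[X]) : moment c (X * p) = moment (c + 2) p := by
  induction p using Polynomial.induction_on' with
  | add p q hp hq => rw [mul_add, map_add, map_add, hp, hq]
  | monomial k a =>
    rw [X_mul_monomial, moment_monomial, moment_monomial]
    push_cast
    ring_nf

variable {E : Type*} [NormedAddCommGroup E] [InnerProductSpace ℝ E] [FiniteDimensional ℝ E]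
  [Nontrivial E] [MeasurableSpace E] [BorelSpace E] (μ : Measure E) [μ.IsAddHaarMeasure]

lemma integrableOn_radial {e : ℝ} (he : 0 < e + Module.finrank ℝ E) (p : ℝ[X]) :
    IntegrableOn (radial e p) (puncturedBall E) μ :=
  integrableOn_puncturedBall_of_isBigO (contDiffOn_radial e p (n := 0)).continuousOn
    (isBigO_radial e p) (integrableOn_norm_rpow_puncturedBall μ he)

lemma integral_radial {e : ℝ} (he : 0 < e + Module.finrank ℝ E) (p : ℝ[X]) :
    ∫ x in puncturedBall E, radial e p x ∂μ =
      μ.toSphere.real univ * moment (e + Module.finrank ℝ E) p := by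
  induction p using Polynomial.induction_on' with
  | add p q hp hq =>
    rw [map_add, mul_add, ← hp, ← hq,
      ← integral_add (integrableOn_radial μ he p) (integrableOn_radial μ he q)]
    simp only [radial, eval_add, mul_add]
  | monomial k a =>
    have hpow : EqOn (radial e (monomial k a)) (fun x => ‖x‖ ^ (e + 2 * k) * a)
        (puncturedBall E) := fun x hx => by
      have hx₀ := norm_pos_iff.2 (ne_zero_of_mem_puncturedBall hx)
      simp only [radial, eval_monomial, Real.rpow_add hx₀, ← pow_mul]
      norm_cast
      ring
    rw [setIntegral_congr_fun isOpen_puncturedBall.measurableSet hpow, integral_mul_const,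
      integral_norm_rpow_puncturedBall μ (by linarith [k.cast_nonneg (α := ℝ)]), moment_monomial]
    ring

end Moment

section Duality

variable {N : ℕ}

-- The tangent line at `y = t` of the convex function `y ↦ t ^ 3 / y ^ 2`.
lemma three_mul_sub_two_mul_le_pow_three_div_sq {t y : ℝ} (ht : 0 ≤ t) (hy : 0 < y) :
    3 * t - 2 * y ≤ t ^ 3 / y ^ 2 := by
  rw [le_div_iff₀ (by positivity)]
  nlinarith [mul_nonneg (by positivity : 0 ≤ t + 2 * y) (sq_nonneg (t - y))]

namespace IsClassicalSolution

variable {lam L : ℝ} {u : ℝ^N → ℝ}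

lemma mul_tangent_le_mul_biharm (hu : IsClassicalSolution N lam u) (hlam : 0 ≤ lam) {x : ℝ^N}
    (hx : x ∈ ball 0 1) {V t : ℝ} (hV : 0 ≤ V) (ht : 0 ≤ t) :
    lam * (3 * (t * V) - 2 * V + 2 * (u x * V)) ≤ t ^ 3 * V * biharm u x := by
  rw [hu.eqn x hx]
  calc lam * (3 * (t * V) - 2 * V + 2 * (u x * V))
      = lam * V * (3 * t - 2 * (1 - u x)) := by ring
    _ ≤ lam * V * (t ^ 3 / (1 - u x) ^ 2) := mul_le_mul_of_nonneg_left
        (three_mul_sub_two_mul_le_pow_three_div_sq ht (sub_pos.2 (hu.lt_one x hx)))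
        (mul_nonneg hlam hV)
    _ = t ^ 3 * V * (lam / (1 - u x) ^ 2) := by ring

lemma integrableOn_mul (hu : IsClassicalSolution N lam u) {V : ℝ^N → ℝ}
    (hV : IntegrableOn V (puncturedBall ℝ^N)) :
    IntegrableOn (fun x => u x * V x) (puncturedBall ℝ^N) :=
  Integrable.bdd_mul hV (hu.isClamped.contDiffOn.continuousOn.aestronglyMeasurable
    isOpen_puncturedBall.measurableSet) (c := 1) <|
    (ae_restrict_mem isOpen_puncturedBall.measurableSet).mono fun x hx => by
      rw [Real.norm_of_nonneg (hu.pos x hx.1).le]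
      exact (hu.lt_one x hx.1).le

theorem le_of_biharm_le [NeZero N] (hu : IsClassicalSolution N lam u) (hlam : 0 < lam)
    {V t φ : ℝ^N → ℝ} (hV₀ : ∀ x ∈ puncturedBall ℝ^N, 0 ≤ V x)
    (ht₀ : ∀ x ∈ puncturedBall ℝ^N, 0 ≤ t x) (hV : IntegrableOn V (puncturedBall ℝ^N))
    (htV : IntegrableOn (fun x => t x * V x) (puncturedBall ℝ^N)) {e : ℝ}
    (hφ : IsClamped e φ) (he : 4 < e + N) (hφ_eq : ∀ x ∈ puncturedBall ℝ^N, φ x = t x ^ 3 * V x)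
    (hbiharm : ∀ x ∈ puncturedBall ℝ^N, biharm φ x ≤ 2 * L * V x)
    (hgain : 2 * ∫ x in puncturedBall ℝ^N, V x < 3 * ∫ x in puncturedBall ℝ^N, t x * V x) :
    lam ≤ L := by
  have hmeas : MeasurableSet (puncturedBall ℝ^N) := isOpen_puncturedBall.measurableSet
  have huV := hu.integrableOn_mul hV
  have hdiff : IntegrableOn (fun x => 3 * (t x * V x) - 2 * V x) (puncturedBall ℝ^N) :=
    (htV.const_mul 3).sub (hV.const_mul 2)
  have hupper : ∀ x ∈ puncturedBall ℝ^N, u x * biharm φ x ≤ 2 * L * (u x * V x) := fun x hx =>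
    (mul_le_mul_of_nonneg_left (hbiharm x hx) (hu.pos x hx.1).le).trans_eq (by ring)
  have hdual : lam * (3 * (∫ x in puncturedBall ℝ^N, t x * V x) -
      2 * (∫ x in puncturedBall ℝ^N, V x) + 2 * ∫ x in puncturedBall ℝ^N, u x * V x) ≤
      2 * L * ∫ x in puncturedBall ℝ^N, u x * V x := by
    calc _ = ∫ x in puncturedBall ℝ^N, lam * (3 * (t x * V x) - 2 * V x + 2 * (u x * V x)) := by
          simp only [← integral_const_mul]
          rw [← integral_sub (htV.const_mul 3) (hV.const_mul 2),
            ← integral_add hdiff (huV.const_mul 2), ← integral_const_mul]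
      _ ≤ ∫ x in puncturedBall ℝ^N, φ x * biharm u x :=
          setIntegral_mono_on ((hdiff.add (huV.const_mul 2)).const_mul lam)
            (hφ.integrableOn_mul_biharm hu.isClamped (by linarith)) hmeas fun x hx => by
              rw [hφ_eq x hx]
              exact hu.mul_tangent_le_mul_biharm hlam.le hx.1 (hV₀ x hx) (ht₀ x hx)
      _ = ∫ x in puncturedBall ℝ^N, u x * biharm φ x :=
          hφ.integral_mul_biharm_comm hu.isClamped (by linarith)
      _ ≤ 2 * L * ∫ x in puncturedBall ℝ^N, u x * V x :=
          (setIntegral_mono_on (hu.isClamped.integrableOn_mul_biharm hφ (by linarith))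
            (huV.const_mul _) hmeas hupper).trans_eq (integral_const_mul _ _)
  have huV₀ : 0 ≤ ∫ x in puncturedBall ℝ^N, u x * V x :=
    setIntegral_nonneg hmeas fun x hx => mul_nonneg (hu.pos x hx.1).le (hV₀ x hx)
  by_contra! hlt
  nlinarith [mul_pos hlam (sub_pos.2 hgain), mul_nonneg (sub_pos.2 hlt).le huV₀]

theorem le_of_radialBiharm_le [NeZero N] (hu : IsClassicalSolution N lam u) (hlam : 0 < lam)
    {κ : ℝ} (hκ : 0 < κ) {τ q : ℝ[X]} (hq : (1 - X) ^ 2 ∣ q)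
    (hτ₀ : ∀ s ∈ Ioo 0 1, 0 ≤ τ.eval s) (hq₀ : ∀ s ∈ Ioo 0 1, 0 ≤ q.eval s)
    (hbiharm : ∀ s ∈ Ioo 0 1,
      (radialBiharm N (κ + 4 - N) (τ ^ 3 * q)).eval s ≤ 2 * L * q.eval s)
    (hgain : 2 * moment κ q < 3 * moment (κ + 4 / 3) (τ * q)) : lam ≤ L := by
  have hne {x : ℝ^N} (hx : x ∈ puncturedBall ℝ^N) : x ≠ 0 := ne_zero_of_mem_puncturedBall hx
  have hmem {x : ℝ^N} (hx : x ∈ puncturedBall ℝ^N) : ‖x‖ ^ 2 ∈ Ioo 0 1 :=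
    mem_puncturedBall_iff_sq.1 hx
  have hmul : EqOn (fun x : ℝ^N => radial (4 / 3) τ x * radial (κ - N) q x)
      (radial (κ + 4 / 3 - N) (τ * q)) (puncturedBall ℝ^N) := fun x hx => by
    simp only [radial_mul_radial _ _ _ _ (hne hx), show 4 / 3 + (κ - N) = κ + 4 / 3 - N by ring]
  have hint {c : ℝ} (hc : 0 < c) (p : ℝ[X]) :
      IntegrableOn (radial (c - N) p : ℝ^N → ℝ) (puncturedBall ℝ^N) :=
    integrableOn_radial volume (by simpa using hc) p
  have hmoment {c : ℝ} (hc : 0 < c) (p : ℝ[X]) :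
      ∫ x in puncturedBall ℝ^N, radial (c - N) p x =
        (volume : Measure ℝ^N).toSphere.real univ * moment c p := by
    simpa using integral_radial (E := ℝ^N) volume (e := c - N) (by simpa using hc) p
  have hmeas : MeasurableSet (puncturedBall ℝ^N) := isOpen_puncturedBall.measurableSet
  have := NeZero.mk (volume : Measure ℝ^N).toSphere_ne_zero
  have hκ' : 0 < κ + 4 / 3 := by positivity
  refine hu.le_of_biharm_le hlam (V := radial (κ - N) q) (t := radial (4 / 3) τ)
    (fun x hx => mul_nonneg (by positivity) (hq₀ _ (hmem hx)))
    (fun x hx => mul_nonneg (by positivity) (hτ₀ _ (hmem hx))) (hint hκ q)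
    ((hint hκ' (τ * q)).congr_fun hmul.symm hmeas)
    (isClamped_radial (κ + 4 - N) (hq.mul_left (τ ^ 3))) (by linarith) (fun x hx => ?_)
    (fun x hx => ?_) ?_
  · simp only [pow_three, mul_assoc, radial_mul_radial _ _ _ _ (hne hx)]
    ring_nf
  · rw [biharm_radial _ _ hx, show κ + 4 - N - 4 = κ - N by ring, radial, radial, mul_left_comm]
    exact mul_le_mul_of_nonneg_left (hbiharm _ (hmem hx)) (by positivity)
  · rw [setIntegral_congr_fun hmeas hmul, hmoment hκ, hmoment hκ', mul_left_comm,
      mul_left_comm 3]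
    exact mul_lt_mul_of_pos_left hgain measureReal_univ_pos

end IsClassicalSolution

end Duality

/-! ### Rational certificates -/

section Certificate

/-- The real polynomial with the given rational coefficients, constant term first. Lists are used
because, unlike `Polynomial`, they can be evaluated by the kernel. -/
noncomputable def ofCoeffs : List ℚ → ℝ[X]
  | [] => 0
  | a :: l => C (a : ℝ) + X * ofCoeffs l

/-- The coefficient list of a sum. -/
def addCoeffs : List ℚ → List ℚ → List ℚ
  | [], m => m
  | l, [] => l
  | a :: l, b :: m => (a + b) :: addCoeffs l m

/-- The coefficient list of a product. -/
def mulCoeffs : List ℚ → List ℚ → List ℚ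
  | [], _ => []
  | a :: l, m => addCoeffs (m.map (a * ·)) (0 :: mulCoeffs l m)

/-- The `moment` of a polynomial given by its coefficient list. -/
def momentCoeffs : ℚ → List ℚ → ℚ
  | _, [] => 0
  | c, a :: l => a / c + momentCoeffs (c + 2) l

/-- The coefficient list of `radialBiharm N e p`. -/
def radialBiharmCoeffs (N : ℕ) : ℚ → List ℚ → List ℚ
  | _, [] => []
  | e, a :: l => (e + N - 4) * ((e - 2) * ((e + N - 2) * (e * a))) :: radialBiharmCoeffs N (e + 2) l

/-- The coefficient list of `(1 + X) ^ d * r + ∑ j, l[j] * (1 + X) ^ (d - 1 - j)`, where `d` is the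
length of `l`. For `r = 0` and nonzero `l` these are the Bernstein coefficients of `l` in degree
`d - 1`, up to binomial factors and order. -/
def bernsteinCoeffs : List ℚ → List ℚ → List ℚ
  | r, [] => r
  | r, a :: l => bernsteinCoeffs (addCoeffs [a] (mulCoeffs [1, 1] r)) l

/-- A sufficient condition for `ofCoeffs l` to be nonnegative on `(0, 1)`: its Bernstein
coefficients, after raising the degree by four, are nonnegative. -/
abbrev HasNonnegBernstein (l : List ℚ) : Prop :=
  ∀ a ∈ bernsteinCoeffs [] (l ++ List.replicate 4 0), 0 ≤ a

lemma ofCoeffs_addCoeffs (l m : List ℚ) :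
    ofCoeffs (addCoeffs l m) = ofCoeffs l + ofCoeffs m := by
  fun_induction addCoeffs l m with
  | case1 => simp [ofCoeffs]
  | case2 => simp [ofCoeffs]
  | case3 a l b m ih =>
    simp only [ofCoeffs, ih, Rat.cast_add, C_add]
    ring

lemma ofCoeffs_map_mul (a : ℚ) (l : List ℚ) :
    ofCoeffs (l.map (a * ·)) = C (a : ℝ) * ofCoeffs l := by
  induction l with
  | nil => simp [ofCoeffs]
  | cons b l ih =>
    simp only [List.map_cons, ofCoeffs, ih, Rat.cast_mul, C_mul]
    ring

lemma ofCoeffs_mulCoeffs (l m : List ℚ) :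
    ofCoeffs (mulCoeffs l m) = ofCoeffs l * ofCoeffs m := by
  induction l with
  | nil => simp [ofCoeffs, mulCoeffs]
  | cons a l ih =>
    simp only [mulCoeffs, ofCoeffs_addCoeffs, ofCoeffs_map_mul, ofCoeffs, ih, Rat.cast_zero, C_0]
    ring

lemma moment_ofCoeffs (c : ℚ) (l : List ℚ) :
    moment c (ofCoeffs l) = momentCoeffs c l := by
  induction l generalizing c with
  | nil => simp [ofCoeffs, momentCoeffs]
  | cons a l ih =>
    rw [ofCoeffs, map_add, moment_C, moment_X_mul, momentCoeffs]
    push_cast [← ih]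
    rfl

lemma euler_C_add_X_mul (e a : ℝ) (p : ℝ[X]) :
    euler e (C a + X * p) = C (e * a) + X * euler (e + 2) p := by
  simp only [euler, derivative_add, derivative_mul, derivative_X, derivative_C, C_add, C_mul,
    C_ofNat]
  ring

lemma radialBiharm_ofCoeffs (N : ℕ) (e : ℚ) (l : List ℚ) :
    radialBiharm N e (ofCoeffs l) = ofCoeffs (radialBiharmCoeffs N e l) := by
  induction l generalizing e with
  | nil => simp [radialBiharm, radialBiharmCoeffs, ofCoeffs, euler]
  | cons a l ih =>
    rw [radialBiharmCoeffs, ofCoeffs, ofCoeffs, ← ih]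
    simp only [radialBiharm, euler_C_add_X_mul]
    push_cast
    ring_nf

lemma eval_ofCoeffs_append_replicate_zero (l : List ℚ) (n : ℕ) (s : ℝ) :
    (ofCoeffs (l ++ List.replicate n 0)).eval s = (ofCoeffs l).eval s := by
  induction l with
  | nil => induction n <;> simp_all [ofCoeffs, List.replicate_succ]
  | cons a l ih => simp [ofCoeffs, ih]

lemma eval_ofCoeffs_nonneg {l : List ℚ} (hl : ∀ a ∈ l, 0 ≤ a) {s : ℝ} (hs : 0 ≤ s) :
    0 ≤ (ofCoeffs l).eval s := by
  induction l with
  | nil => simp [ofCoeffs]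
  | cons a l ih =>
    rw [List.forall_mem_cons] at hl
    simp only [ofCoeffs, eval_add, eval_mul, eval_C, eval_X]
    exact add_nonneg (Rat.cast_nonneg.2 hl.1) (mul_nonneg hs (ih hl.2))

lemma eval_bernsteinCoeffs (r l : List ℚ) {w : ℝ} (hw : 1 + w ≠ 0) :
    (ofCoeffs (bernsteinCoeffs r l)).eval w = (1 + w) ^ l.length *
      ((ofCoeffs r).eval w + (1 + w)⁻¹ * (ofCoeffs l).eval (1 + w)⁻¹) := by
  induction l generalizing r with
  | nil => simp [bernsteinCoeffs, ofCoeffs]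
  | cons a l ih =>
    simp only [bernsteinCoeffs, ih, ofCoeffs_addCoeffs, ofCoeffs_mulCoeffs, ofCoeffs,
      List.length_cons, eval_add, eval_mul, eval_C, eval_X, eval_zero, Rat.cast_one]
    field_simp
    ring

lemma HasNonnegBernstein.eval_nonneg {l : List ℚ} (hl : HasNonnegBernstein l) {s : ℝ}
    (hs : s ∈ Ioo 0 1) : 0 ≤ (ofCoeffs l).eval s := by
  have hinv : (1 + (s⁻¹ - 1))⁻¹ = s := by rw [add_sub_cancel, inv_inv]
  have hpos : 0 < 1 + (s⁻¹ - 1) := by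
    rw [add_sub_cancel]
    exact inv_pos.2 hs.1
  have h := eval_ofCoeffs_nonneg hl (sub_nonneg.2 ((one_le_inv₀ hs.1).2 hs.2.le))
  rw [eval_bernsteinCoeffs _ _ hpos.ne', hinv, eval_ofCoeffs_append_replicate_zero] at h
  simp only [ofCoeffs, eval_zero, zero_add] at h
  exact nonneg_of_mul_nonneg_right (nonneg_of_mul_nonneg_right h (by positivity)) hs.1

/-- Rational data `(κ, τ, m)` certifying `λ ≤ L` in dimension `N`: with `q = (1 - X) ^ 2 * m`,
the hypotheses of `IsClassicalSolution.le_of_radialBiharm_le` hold for `τ` and `q`. -/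
abbrev IsCertificate (N : ℕ) (L κ : ℚ) (τ m : List ℚ) : Prop :=
  let q := mulCoeffs [1, -2, 1] m
  let τq := mulCoeffs τ q
  0 < κ ∧ HasNonnegBernstein τ ∧ HasNonnegBernstein m ∧
    HasNonnegBernstein (addCoeffs (mulCoeffs [2 * L] q)
      (mulCoeffs [-1] (radialBiharmCoeffs N (κ + 4 - N) (mulCoeffs τ (mulCoeffs τ τq))))) ∧
    2 * momentCoeffs κ q < 3 * momentCoeffs (κ + 4 / 3) τq

theorem IsClassicalSolution.le_of_isCertificate {N : ℕ} [NeZero N] {lam : ℝ}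
    {u : ℝ^N → ℝ} (hu : IsClassicalSolution N lam u) (hlam : 0 < lam)
    {L κ : ℚ} {τ m : List ℚ} (h : IsCertificate N L κ τ m) : lam ≤ L := by
  obtain ⟨hκ, hτ, hm, hslack, hgain⟩ := h
  have hq : ofCoeffs (mulCoeffs [1, -2, 1] m) = (1 - X) ^ 2 * ofCoeffs m := by
    simp only [ofCoeffs_mulCoeffs, ofCoeffs, Rat.cast_neg, Rat.cast_one, Rat.cast_ofNat, C_neg,
      C_1, C_ofNat]
    ring
  generalize mulCoeffs [1, -2, 1] m = q at hq hslack hgain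
  refine hu.le_of_radialBiharm_le hlam (κ := κ) (Rat.cast_pos.2 hκ) (τ := ofCoeffs τ)
    (hq ▸ dvd_mul_right _ _) (fun s hs => hτ.eval_nonneg hs) (fun s hs => ?_) (fun s hs => ?_) ?_
  · simpa [hq] using mul_nonneg (sq_nonneg _) (hm.eval_nonneg hs)
  · have hdefect := hslack.eval_nonneg hs
    simp only [ofCoeffs_addCoeffs, ofCoeffs_mulCoeffs, ← radialBiharm_ofCoeffs, ofCoeffs,
      eval_add, eval_mul, eval_C, eval_X, eval_zero] at hdefect ⊢
    push_cast at hdefect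
    rw [pow_three, mul_assoc, mul_assoc]
    linarith
  · rw [← ofCoeffs_mulCoeffs, show (κ : ℝ) + 4 / 3 = (κ + 4 / 3 : ℚ) by push_cast; rfl,
      moment_ofCoeffs, moment_ofCoeffs]
    exact_mod_cast hgain

lemma isCertificate_ten :
    IsCertificate 10 450 (5 / 3) [7 / 4, -13 / 20] [2, 10, 5, 9, -1, 4] := by
  decide +kernel

lemma isCertificate_eleven :
    IsCertificate 11 560 (5 / 3) [33 / 20, -9 / 20] [1, 5, 4, 4, -1, 2] := by
  decide +kernel

lemma isCertificate_twelve :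
    IsCertificate 12 680 (5 / 3) [8 / 5, -2 / 5] [1, 4, 6, 5, 0, 2] := by
  decide +kernel

lemma isCertificate_thirteen :
    IsCertificate 13 802 (5 / 3) [31 / 20, -2 / 5] [1, 4, 8, 8, 2, 3] := by
  decide +kernel

lemma isCertificate_fourteen :
    IsCertificate 14 940 (5 / 3) [3 / 2, -7 / 20] [1, 4, 7, 12, 2, 5] := by
  decide +kernel

lemma isCertificate_fifteen :
    IsCertificate 15 1100 (5 / 3) [3 / 2, -1 / 4] [1, 3, 5, 8, 3, 4] := by
  decide +kernel

lemma isCertificate_sixteen :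
    IsCertificate 16 1260 (5 / 3) [29 / 20, -3 / 20] [1, 3, 4, 9, 3, 5] := by
  decide +kernel

end Certificate

end

/-- for 10 ≤ N ≤ 16, the pull-in voltage satisfies λ* ≤ λ'_N. -/
theorem pullIn_le_of_dim_10_to_16 (N : ℕ) (hN₁ : 10 ≤ N) (hN₂ : N ≤ 16) :
    ∀ lam ∈ solSet N, lam ≤ lamPrime N := by
  rintro lam ⟨hlam, u, hu⟩
  interval_cases N
  · simpa [lamPrime] using hu.le_of_isCertificate hlam isCertificate_ten
  · simpa [lamPrime] using hu.le_of_isCertificate hlam isCertificate_eleven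
  · simpa [lamPrime] using hu.le_of_isCertificate hlam isCertificate_twelve
  · simpa [lamPrime] using hu.le_of_isCertificate hlam isCertificate_thirteen
  · simpa [lamPrime] using hu.le_of_isCertificate hlam isCertificate_fourteen
  · simpa [lamPrime] using hu.le_of_isCertificate hlam isCertificate_fifteen
  · simpa [lamPrime] using hu.le_of_isCertificate hlam isCertificate_sixteen
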